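/- Commutation of mixed Euclidean derivatives: let α>0 and u∈C^α. For any multi-indices γ,β∈ℕ₀^d with 0 ≤ (1+ϑ)|γ| + |β| < α, the derivatives ∂_v^β ∂_x^γ u and ∂_x^γ ∂_v^β u both exist at every point of ℝ×ℝ^{2d}, are continuous on ℝ×ℝ^{2d}, and agree: ∂_v^β ∂_x^γ u = ∂_x^γ ∂_v^β u. -/

import Mathlib

noncomputable section
open scoped BigOperators ENNReal

/-- Points of the Galilean group `ℝ × ℝ^d × ℝ^d`, written `z = (t, x, v)`. -/
abbrev Pt (d : ℕ) := ℝ × EuclideanSpace ℝ (Fin d) × EuclideanSpace ℝ (Fin d)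

variable {d : ℕ}

/-- Flow of the drift field `Y = ⟨v, ∇ₓ⟩ + ∂ₜ`. -/
def flowY (τ : ℝ) (z : Pt d) : Pt d := (z.1 + τ, z.2.1 + τ • z.2.2, z.2.2)

/-- Flow of the field `Z_h = ⟨h, ∇_v⟩`. -/
def flowZ (h : EuclideanSpace ℝ (Fin d)) (τ : ℝ) (z : Pt d) : Pt d :=
  (z.1, z.2.1, z.2.2 + τ • h)

/-- Flow of the constant field `⟨h, ∇ₓ⟩`. -/
def flowX (h : EuclideanSpace ℝ (Fin d)) (τ : ℝ) (z : Pt d) : Pt d :=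
  (z.1, z.2.1 + τ • h, z.2.2)

/-- `u` has a Lie derivative at `z` along the flow `φ`. -/
def HasLieAt (φ : ℝ → Pt d → Pt d) (u : Pt d → ℝ) (z : Pt d) : Prop :=
  DifferentiableAt ℝ (fun τ => u (φ τ z)) 0

/-- Lie derivative along `Y` (junk value if it does not exist). -/
def lieY (u : Pt d → ℝ) (z : Pt d) : ℝ := deriv (fun τ => u (flowY τ z)) 0

/-- Partial derivative `∂_{v_i}` as a Lie derivative along `Z_i`. -/
def dv (i : Fin d) (u : Pt d → ℝ) (z : Pt d) : ℝ :=
  deriv (fun τ => u (flowZ (EuclideanSpace.single i 1) τ z)) 0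

/-- Partial derivative `∂_{x_i}`. -/
def dx (i : Fin d) (u : Pt d → ℝ) (z : Pt d) : ℝ :=
  deriv (fun τ => u (flowX (EuclideanSpace.single i 1) τ z)) 0

/-- The list of indices associated to a multi-index `β` (index `i` repeated `β i` times). -/
def idxList (β : Fin d → ℕ) : List (Fin d) := (List.ofFn fun i => List.replicate (β i) i).flatten

/-- Iterated application of first-order operators along a list of indices. -/
def derivList (D : Fin d → (Pt d → ℝ) → Pt d → ℝ) : List (Fin d) → (Pt d → ℝ) → Pt d → ℝ
  | [], u => u
  | i :: l, u => D i (derivList D l u)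

/-- `∂_v^β u`. -/
def dvPow (β : Fin d → ℕ) (u : Pt d → ℝ) : Pt d → ℝ := derivList dv (idxList β) u

/-- `∂_x^γ u`. -/
def dxPow (γ : Fin d → ℕ) (u : Pt d → ℝ) : Pt d → ℝ := derivList dx (idxList γ) u

/-- All the intermediate derivatives in an iterated derivative exist at every point. -/
def ExistsDList (φ : Fin d → ℝ → Pt d → Pt d) (D : Fin d → (Pt d → ℝ) → Pt d → ℝ) :
    List (Fin d) → (Pt d → ℝ) → Prop
  | [], _ => True
  | i :: l, u => ExistsDList φ D l u ∧ ∀ z, HasLieAt (φ i) (derivList D l u) z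

/-- `∂_v^β u` exists (at every point, at every stage). -/
def ExistsDvPow (β : Fin d → ℕ) (u : Pt d → ℝ) : Prop :=
  ExistsDList (fun i => flowZ (EuclideanSpace.single i 1)) dv (idxList β) u

/-- `∂_x^γ u` exists (at every point, at every stage). -/
def ExistsDxPow (γ : Fin d → ℕ) (u : Pt d → ℝ) : Prop :=
  ExistsDList (fun i => flowX (EuclideanSpace.single i 1)) dx (idxList γ) u

/-- The iterated Lie derivatives `Y^j u`, `j = 1, …, k`, exist at every point. -/
def ExistsLieYIter (u : Pt d → ℝ) : ℕ → Prop
  | 0 => True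
  | k + 1 => ExistsLieYIter u k ∧ ∀ z : Pt d, HasLieAt flowY (lieY^[k] u) z

/-- Hölder seminorm `‖u‖_{C^α_{Z_i}}`. -/
def semiZ (i : Fin d) (α : ℝ) (u : Pt d → ℝ) : ℝ≥0∞ :=
  ⨆ (z : Pt d) (τ : ℝ) (_ : τ ≠ 0),
    ENNReal.ofReal (|u (flowZ (EuclideanSpace.single i 1) τ z) - u z| / |τ| ^ α)

/-- Hölder seminorm `‖u‖_{C^α_Y}`. -/
def semiY (ϑ α : ℝ) (u : Pt d → ℝ) : ℝ≥0∞ :=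
  ⨆ (z : Pt d) (τ : ℝ) (_ : τ ≠ 0),
    ENNReal.ofReal (|u (flowY τ z) - u z| / |τ| ^ (α / ϑ))

open Classical in
/-- The intrinsic Hölder seminorm `‖u‖_{C^α}`, defined recursively (with fuel). -/
def hNormAux (ϑ : ℝ) : ℕ → ℝ → (Pt d → ℝ) → ℝ≥0∞
  | 0, α, u => semiY ϑ α u + ∑ i, semiZ i α u
  | n + 1, α, u =>
    if α ≤ min 1 ϑ then semiY ϑ α u + ∑ i, semiZ i α u
    else if α ≤ max 1 ϑ then
      if ϑ < 1 then hNormAux ϑ n (α - ϑ) (lieY u) + ∑ i, semiZ i α u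
      else semiY ϑ α u + ∑ i, hNormAux ϑ n (α - 1) (dv i u)
    else hNormAux ϑ n (α - ϑ) (lieY u) + ∑ i, hNormAux ϑ n (α - 1) (dv i u)

open Classical in
/-- Membership in the intrinsic Hölder space `C^α`, defined recursively (with fuel). -/
def memAux (ϑ : ℝ) : ℕ → ℝ → (Pt d → ℝ) → Prop
  | 0, α, u => hNormAux ϑ 0 α u ≠ ⊤
  | n + 1, α, u =>
    if α ≤ min 1 ϑ then hNormAux ϑ (n + 1) α u ≠ ⊤
    else if α ≤ max 1 ϑ then
      if ϑ < 1 then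
        (∀ z : Pt d, HasLieAt flowY u z) ∧ memAux ϑ n (α - ϑ) (lieY u) ∧
          hNormAux ϑ (n + 1) α u ≠ ⊤
      else
        (∀ (i : Fin d) (z : Pt d), HasLieAt (flowZ (EuclideanSpace.single i 1)) u z) ∧
          (∀ i : Fin d, memAux ϑ n (α - 1) (dv i u)) ∧ hNormAux ϑ (n + 1) α u ≠ ⊤
    else
      (∀ z : Pt d, HasLieAt flowY u z) ∧ memAux ϑ n (α - ϑ) (lieY u) ∧
        (∀ (i : Fin d) (z : Pt d), HasLieAt (flowZ (EuclideanSpace.single i 1)) u z) ∧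
          (∀ i : Fin d, memAux ϑ n (α - 1) (dv i u)) ∧ hNormAux ϑ (n + 1) α u ≠ ⊤

/-- Enough fuel for the recursion defining `C^α`. -/
def fuel (ϑ α : ℝ) : ℕ := Nat.ceil (α / min 1 ϑ) + 1

/-- The intrinsic Hölder seminorm `‖u‖_{C^α}` (value in `ℝ≥0∞`). -/
def holderNorm (ϑ α : ℝ) (u : Pt d → ℝ) : ℝ≥0∞ := hNormAux ϑ (fuel ϑ α) α u

/-- `u ∈ C^α`. -/
def IsHolder (ϑ α : ℝ) (u : Pt d → ℝ) : Prop := memAux ϑ (fuel ϑ α) α u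

/-!
Since `∂_{x_i} = [Z_i, Y]`, one expects `∂_{x_i} u = Z_i Y u - Y Z_i u`, but `u` is not known to be
differentiable in `x_i` to begin with. The averages of `u` along the `x_i`-lines are, and averaging
commutes with `Y` and `Z_i` because translations in `x_i` commute with both flows. For the averages
the identity follows from Schwarz's theorem in Peano's form; it says that `Z_i Y u - Y Z_i u`
integrates along the `x_i`-lines to the increments of `u`, hence is `∂_{x_i} u`. So `∂_{x_i}` costs
`1 + ϑ` orders of regularity, and Schwarz's theorem for commuting flows gives the commutation.

Continuity is needed throughout. A function which varies little along the flows of `Y` and `Z_i`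
also varies little in `x_i`, as the loops `Y, Z_i, -Y, -Z_i` are translations in `x_i`; composing
these motions, one reaches any point from any other one.
-/

open Set Filter Topology MeasureTheory

section MixedPartials

variable {𝕜 E : Type*} [RCLike 𝕜] [NormedAddCommGroup E] [NormedSpace 𝕜 E]

theorem norm_mixed_difference_sub_le {f f₁ f₁₂ : 𝕜 → 𝕜 → E} {s t : Set 𝕜} (hs : Convex ℝ s)
    (ht : Convex ℝ t) {A : E} {ε : ℝ}
    (h₁ : ∀ a ∈ s, ∀ b ∈ t, HasDerivAt (f · b) (f₁ a b) a)
    (h₁₂ : ∀ a ∈ s, ∀ b ∈ t, HasDerivAt (f₁ a ·) (f₁₂ a b) b)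
    (hA : ∀ a ∈ s, ∀ b ∈ t, ‖f₁₂ a b - A‖ ≤ ε)
    {x a y b : 𝕜} (hx : x ∈ s) (ha : a ∈ s) (hy : y ∈ t) (hb : b ∈ t) :
    ‖f a b - f a y - (f x b - f x y) - (a - x) • (b - y) • A‖ ≤ ε * ‖b - y‖ * ‖a - x‖ := by
  have increment_f₁ : ∀ a ∈ s, ‖f₁ a b - f₁ a y - (b - y) • A‖ ≤ ε * ‖b - y‖ := fun a ha ↦ by
    have := ht.norm_image_sub_le_of_norm_hasDerivWithin_le (f := fun b ↦ f₁ a b - b • A)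
      (fun c hc ↦ ((h₁₂ a ha c hc).sub ((hasDerivAt_id c).smul_const A)).hasDerivWithinAt)
      (fun c hc ↦ by simpa using hA a ha c hc) hy hb
    convert this using 2
    module
  have := hs.norm_image_sub_le_of_norm_hasDerivWithin_le
    (f := fun a ↦ f a b - f a y - a • (b - y) • A)
    (fun c hc ↦ (((h₁ c hc b hb).sub (h₁ c hc y hy)).sub
      ((hasDerivAt_id c).smul_const _)).hasDerivWithinAt)
    (fun c hc ↦ by simpa using increment_f₁ c hc) hx ha
  convert this using 2
  module

/-- **Peano's form of Schwarz's theorem**. -/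
theorem hasDerivAt_partial_of_continuousAt_mixed {f f₁ f₁₂ : 𝕜 → 𝕜 → E} {f₂ : 𝕜 → E} {x y : 𝕜}
    (h₁ : ∀ᶠ p in 𝓝 (x, y), HasDerivAt (f · p.2) (f₁ p.1 p.2) p.1)
    (h₁₂ : ∀ᶠ p in 𝓝 (x, y), HasDerivAt (f₁ p.1 ·) (f₁₂ p.1 p.2) p.2)
    (hc : ContinuousAt ↿f₁₂ (x, y))
    (h₂ : ∀ᶠ a in 𝓝 x, HasDerivAt (f a ·) (f₂ a) y) : HasDerivAt f₂ (f₁₂ x y) x := by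
  rw [hasDerivAt_iff_isLittleO, Asymptotics.isLittleO_iff]
  intro ε hε
  have hA : ∀ᶠ p in 𝓝 (x, y), ‖f₁₂ p.1 p.2 - f₁₂ x y‖ ≤ ε := by
    filter_upwards [hc.eventually (Metric.closedBall_mem_nhds _ hε)] with p hp
    simpa [dist_eq_norm, Function.HasUncurry.uncurry] using hp
  obtain ⟨r, hr, hball⟩ := Metric.eventually_nhds_iff_ball.1 (h₁.and (h₁₂.and hA))
  simp only [← ball_prod_same, mem_prod, and_imp, Prod.forall] at hball
  filter_upwards [h₂, Metric.ball_mem_nhds x hr] with a h₂a ha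
  refine HasDerivAt.le_of_lip'
    ((h₂a.sub h₂.self_of_nhds).sub ((hasDerivAt_id y).smul_const ((a - x) • f₁₂ x y)) |>.congr_deriv
      (by rw [one_smul])) (by positivity) ?_
  filter_upwards [Metric.ball_mem_nhds y hr] with b hb
  convert norm_mixed_difference_sub_le (convex_ball x r) (convex_ball y r)
    (fun a ha b hb ↦ (hball a b ha hb).1) (fun a ha b hb ↦ (hball a b ha hb).2.1)
    (fun a ha b hb ↦ (hball a b ha hb).2.2) (Metric.mem_ball_self hr) ha
    (Metric.mem_ball_self hr) hb using 1
  · congr 1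
    simp only [Pi.sub_apply, id_eq]
    module
  · ring

theorem hasDerivAt_id_smul_zero {h : 𝕜 → E} (hh : ContinuousAt h 0) :
    HasDerivAt (fun τ ↦ τ • h τ) (h 0) 0 := by
  rw [hasDerivAt_iff_tendsto_slope_zero]
  refine (hh.tendsto.mono_left nhdsWithin_le_nhds).congr' ?_
  filter_upwards [self_mem_nhdsWithin] with τ hτ
  simp [inv_smul_smul₀ (show τ ≠ 0 from hτ)]

end MixedPartials

section FlowDerivatives

variable {P E : Type*} [TopologicalSpace P] [NormedAddCommGroup E] [NormedSpace ℝ E]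

/-- `g'` is the Lie derivative of `g` along the flow `φ`, at every point. -/
def HasFlowDeriv (φ : Flow ℝ P) (g g' : P → E) : Prop :=
  ∀ z, HasDerivAt (fun τ ↦ g (φ τ z)) (g' z) 0

/-- The Lie derivative of `g` along the flow `φ`, with the junk value `0` where it does not
exist. -/
def flowDeriv (φ : Flow ℝ P) (g : P → E) (z : P) : E := deriv (fun τ ↦ g (φ τ z)) 0

variable {X Y Z φ : Flow ℝ P} {g g' h h' : P → E}

theorem HasFlowDeriv.flowDeriv_eq (hg : HasFlowDeriv φ g g') : flowDeriv φ g = g' :=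
  funext fun z ↦ (hg z).deriv

theorem HasFlowDeriv.sub (hg : HasFlowDeriv φ g g') (hh : HasFlowDeriv φ h h') :
    HasFlowDeriv φ (g - h) (g' - h') :=
  fun z ↦ (hg z).sub (hh z)

theorem HasFlowDeriv.hasDerivAt (hg : HasFlowDeriv φ g g') (z : P) (τ : ℝ) :
    HasDerivAt (fun σ ↦ g (φ σ z)) (g' (φ τ z)) τ := by
  have hshift := HasDerivAt.comp_sub_const τ τ (by simpa using hg (φ τ z))
  simpa only [← φ.map_add, sub_add_cancel] using hshift

/-- The integral of `g` over the piece of length `ε` of the orbit of `φ` through `z`. As a function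
of `z` it gains a derivative along `φ` over `g`. -/
def flowIntegral (φ : Flow ℝ P) (ε : ℝ) (g : P → E) (z : P) : E := ∫ a in 0..ε, g (φ a z)

theorem continuous_flowIntegral [FirstCountableTopology P] (hg : Continuous g) :
    Continuous fun p : ℝ × P ↦ flowIntegral φ p.1 g p.2 := by
  unfold flowIntegral
  fun_prop

theorem continuous_flowIntegral' [FirstCountableTopology P] (hg : Continuous g) (ε : ℝ) :
    Continuous (flowIntegral φ ε g) :=
  (continuous_flowIntegral hg).comp (Continuous.prodMk_right ε)

theorem flowIntegral_sub (hg : Continuous g) (hh : Continuous h) (ε : ℝ) :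
    flowIntegral φ ε (g - h) = flowIntegral φ ε g - flowIntegral φ ε h := by
  funext z
  exact intervalIntegral.integral_sub (Continuous.intervalIntegrable (by fun_prop) _ _)
    (Continuous.intervalIntegrable (by fun_prop) _ _)

theorem flowIntegral_comp (hXY : ∀ a b, Function.Commute (X a) (Y b)) (ε τ : ℝ) (z : P) :
    flowIntegral X ε (fun y ↦ g (Y τ y)) z = flowIntegral X ε g (Y τ z) := by
  simp only [flowIntegral, fun a ↦ (hXY a τ).eq z]

theorem flowIntegral_comm (hXY : ∀ a b, Function.Commute (X a) (Y b)) (hg : Continuous g)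
    (a b : ℝ) : flowIntegral X a (flowIntegral Y b g) = flowIntegral Y b (flowIntegral X a g) := by
  funext z
  have hcont : Continuous (Function.uncurry fun s t ↦ g (X s (Y t z))) := by fun_prop
  have hint := (hcont.continuousOn.integrableOn_compact (μ := volume)
    (isCompact_uIcc.prod isCompact_uIcc)).mono_set
    (prod_mono (uIoc_subset_uIcc (a := 0) (b := a)) (uIoc_subset_uIcc (a := 0) (b := b)))
  simpa only [flowIntegral, fun s t ↦ (hXY s t).eq z] using
    intervalIntegral_intervalIntegral_swap hint

variable {u uX uY uZ uXZ uYX uYZ uZY : P → E}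

theorem HasFlowDeriv.comm (hXZ : ∀ a b, Function.Commute (X a) (Z b))
    (hX : HasFlowDeriv X u uX) (hZ : HasFlowDeriv Z u uZ) (hXZu : HasFlowDeriv Z uX uXZ)
    (hcont : Continuous uXZ) : HasFlowDeriv X uZ uXZ := by
  intro z
  have hswap (a s : ℝ) : X a (Z s z) = Z s (X a z) := (hXZ a s).eq z
  have hpeano := hasDerivAt_partial_of_continuousAt_mixed (x := 0) (y := 0)
    (f := fun a s ↦ u (X a (Z s z))) (f₁ := fun a s ↦ uX (X a (Z s z)))
    (f₁₂ := fun a s ↦ uXZ (X a (Z s z))) (f₂ := fun a ↦ uZ (X a z))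
    (.of_forall fun p ↦ hX.hasDerivAt _ _)
    (.of_forall fun p ↦ by simpa only [hswap] using hXZu.hasDerivAt _ _)
    (by unfold Function.HasUncurry.uncurry; fun_prop)
    (.of_forall fun a ↦ by simpa only [hswap] using hZ (X a z))
  simpa using hpeano

theorem HasFlowDeriv.hasDerivAt_comp_flow (hXZ : ∀ a b, Function.Commute (X a) (Z b))
    (hX : HasFlowDeriv X u uX) (hZ : HasFlowDeriv Z u uZ) (hcontX : Continuous uX)
    (hcontZ : Continuous uZ) (τ s : ℝ) (z : P) :
    HasDerivAt (fun s ↦ u (X (τ * s) (Z s z)))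
      (τ • uX (X (τ * s) (Z s z)) + uZ (X (τ * s) (Z s z))) s := by
  have hderivX (a b : ℝ) : HasDerivAt (fun a ↦ u (X a (Z b z))) (uX (X a (Z b z))) a :=
    hX.hasDerivAt _ _
  have hderivZ (a b : ℝ) : HasDerivAt (fun b ↦ u (X a (Z b z))) (uZ (X a (Z b z))) b := by
    simpa only [fun a b ↦ (hXZ a b).eq z] using hZ.hasDerivAt (X a z) b
  have hcontSpan : Continuous (ContinuousLinearMap.toSpanSingleton (M₁ := E) ℝ) :=
    (ContinuousLinearMap.toSpanSingletonCLE (𝕜 := ℝ) (E := E)).continuous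
  have htotal := hasStrictFDerivAt_uncurry_coprod (𝕜 := ℝ) (u := (τ * s, s))
    (f := fun a b ↦ u (X a (Z b z)))
    (f₁ := fun a b ↦ .toSpanSingleton ℝ (uX (X a (Z b z))))
    (f₂ := fun a b ↦ .toSpanSingleton ℝ (uZ (X a (Z b z))))
    (.of_forall fun p ↦ (hderivX p.1 p.2).hasFDerivAt)
    (.of_forall fun p ↦ (hderivZ p.1 p.2).hasFDerivAt)
    (hcontSpan.comp (by fun_prop)).continuousAt (hcontSpan.comp (by fun_prop)).continuousAt
  have hline : HasDerivAt (fun s ↦ (τ * s, s)) (τ * 1, 1) s :=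
    ((hasDerivAt_id s).const_mul τ).prodMk (hasDerivAt_id s)
  refine (HasFDerivAt.comp_hasDerivAt (f := fun s ↦ (τ * s, s)) s htotal.hasFDerivAt
    hline).congr_deriv ?_
  simp [Function.HasUncurry.uncurry]

/-- The flow `X` commutes with `Y` and `Z`, and measures the failure of `Y` and `Z` to commute:
the generators of the three flows span a Heisenberg Lie algebra, with `X = [Z, Y]` central. -/
structure IsHeisenbergTriple (X Y Z : Flow ℝ P) : Prop where
  commute_left (a b : ℝ) : Function.Commute (X a) (Y b)
  commute_right (a b : ℝ) : Function.Commute (X a) (Z b)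
  apply_apply (τ s : ℝ) (z : P) : Y τ (Z s z) = X (τ * s) (Z s (Y τ z))

namespace IsHeisenbergTriple

theorem commutator (hXYZ : IsHeisenbergTriple X Y Z) (τ s : ℝ) (z : P) :
    Y (-τ) (Z (-s) (Y τ (Z s z))) = X (τ * s) z := by
  simp [hXYZ.apply_apply (-τ), ← Flow.map_add]

theorem bracket_identity (hXYZ : IsHeisenbergTriple X Y Z) (hX : HasFlowDeriv X u uX)
    (hY : HasFlowDeriv Y u uY) (hZ : HasFlowDeriv Z u uZ) (hYX : HasFlowDeriv X uY uYX)
    (hYZ : HasFlowDeriv Z uY uYZ) (hZY : HasFlowDeriv Y uZ uZY) (hcontX : Continuous uX)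
    (hcontZ : Continuous uZ) (hcontYX : Continuous uYX) (hcontYZ : Continuous uYZ) :
    uX + uZY = uYZ := by
  funext z
  have hderivZ {g gX gZ : P → E} (hgX : HasFlowDeriv X g gX) (hgZ : HasFlowDeriv Z g gZ)
      (hcX : Continuous gX) (hcZ : Continuous gZ) (τ s : ℝ) :
      HasDerivAt (fun s ↦ g (Y τ (Z s z))) (τ • gX (Y τ (Z s z)) + gZ (Y τ (Z s z))) s := by
    simpa only [hXYZ.apply_apply] using
      hgX.hasDerivAt_comp_flow hXYZ.commute_right hgZ hcX hcZ τ s (Y τ z)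
  have hpeano : HasDerivAt (fun τ ↦ τ • uX (Y τ z) + uZ (Y τ z)) (uYZ z) 0 := by
    simpa using hasDerivAt_partial_of_continuousAt_mixed (x := 0) (y := 0)
      (f := fun τ s ↦ u (Y τ (Z s z))) (f₁ := fun τ s ↦ uY (Y τ (Z s z)))
      (f₁₂ := fun τ s ↦ τ • uYX (Y τ (Z s z)) + uYZ (Y τ (Z s z)))
      (.of_forall fun p ↦ hY.hasDerivAt _ _)
      (.of_forall fun p ↦ hderivZ hYX hYZ hcontYX hcontYZ _ _)
      (by unfold Function.HasUncurry.uncurry; fun_prop)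
      (.of_forall fun τ ↦ by simpa using hderivZ hX hZ hcontX hcontZ τ 0)
  have hproduct : HasDerivAt (fun τ ↦ τ • uX (Y τ z) + uZ (Y τ z)) (uX z + uZY z) 0 := by
    have hcont : ContinuousAt (fun τ ↦ uX (Y τ z)) 0 := by fun_prop
    simpa [Pi.add_def] using (hasDerivAt_id_smul_zero hcont).add (hZY z)
  exact hproduct.unique hpeano

end IsHeisenbergTriple

variable [CompleteSpace E]

theorem hasFlowDeriv_iff_flowIntegral_eq_sub (hg' : Continuous g') :
    HasFlowDeriv φ g g' ↔ ∀ ε z, flowIntegral φ ε g' z = g (φ ε z) - g z := by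
  have hcont (z : P) : Continuous fun a ↦ g' (φ a z) := by fun_prop
  refine ⟨fun hg ε z ↦ ?_, fun hg z ↦ ?_⟩
  · simpa [flowIntegral] using intervalIntegral.integral_eq_sub_of_hasDerivAt
      (fun τ _ ↦ hg.hasDerivAt z τ) ((hcont z).intervalIntegrable 0 ε)
  · have hderiv := ((hcont z).integral_hasStrictDerivAt 0 0).hasDerivAt.add_const (g z)
    simpa [← flowIntegral.eq_1, hg] using hderiv

protected theorem HasFlowDeriv.flowIntegral [FirstCountableTopology P]
    (hXφ : ∀ a b, Function.Commute (X a) (φ b)) (hg : HasFlowDeriv φ g g') (hcont : Continuous g)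
    (hcont' : Continuous g') (ε : ℝ) :
    HasFlowDeriv φ (flowIntegral X ε g) (flowIntegral X ε g') := by
  rw [hasFlowDeriv_iff_flowIntegral_eq_sub (continuous_flowIntegral' hcont' ε)]
  intro τ z
  have hincrement : flowIntegral φ τ g' = (fun y ↦ g (φ τ y)) - g :=
    funext ((hasFlowDeriv_iff_flowIntegral_eq_sub hcont').1 hg τ)
  rw [← flowIntegral_comm hXφ hcont', hincrement, flowIntegral_sub (by fun_prop) hcont,
    Pi.sub_apply, flowIntegral_comp hXφ]

theorem hasFlowDeriv_flowIntegral (hg : Continuous g) (ε : ℝ) :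
    HasFlowDeriv X (flowIntegral X ε g) (fun z ↦ g (X ε z) - g z) := by
  intro z
  have hcont : Continuous fun a ↦ g (X a z) := by fun_prop
  have hshift (τ : ℝ) : flowIntegral X ε g (X τ z) =
      (∫ a in 0..τ + ε, g (X a z)) - ∫ a in 0..τ, g (X a z) := by
    rw [intervalIntegral.integral_interval_sub_left (hcont.intervalIntegrable _ _)
      (hcont.intervalIntegrable _ _)]
    simp only [flowIntegral, ← X.map_add]
    rw [intervalIntegral.integral_comp_add_right (fun a ↦ g (X a z)), zero_add, add_comm]
  have hleft := (hcont.integral_hasStrictDerivAt 0 (0 + ε)).hasDerivAt.comp_add_const 0 ε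
  simpa [hshift, Pi.sub_def] using hleft.sub (hcont.integral_hasStrictDerivAt 0 0).hasDerivAt

/-- Averaging along `X` makes `u` differentiable along `X`, so that the bracket identity applies to
the averages; letting go of the averages turns it into an integrated form of the claim. -/
theorem IsHeisenbergTriple.hasFlowDeriv_sub [FirstCountableTopology P]
    (hXYZ : IsHeisenbergTriple X Y Z) (hY : HasFlowDeriv Y u uY) (hZ : HasFlowDeriv Z u uZ)
    (hYZ : HasFlowDeriv Z uY uYZ) (hZY : HasFlowDeriv Y uZ uZY) (hcont : Continuous u)
    (hcontY : Continuous uY) (hcontZ : Continuous uZ) (hcontYZ : Continuous uYZ)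
    (hcontZY : Continuous uZY) : HasFlowDeriv X u (uYZ - uZY) := by
  rw [hasFlowDeriv_iff_flowIntegral_eq_sub (hcontYZ.sub hcontZY)]
  intro ε z
  have hbracket := hXYZ.bracket_identity (hasFlowDeriv_flowIntegral hcont ε)
    (hY.flowIntegral hXYZ.commute_left hcont hcontY ε)
    (hZ.flowIntegral hXYZ.commute_right hcont hcontZ ε) (hasFlowDeriv_flowIntegral hcontY ε)
    (hYZ.flowIntegral hXYZ.commute_right hcontY hcontYZ ε)
    (hZY.flowIntegral hXYZ.commute_left hcontZ hcontZY ε) (by fun_prop)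
    (continuous_flowIntegral' hcontZ ε) (by fun_prop) (continuous_flowIntegral' hcontYZ ε)
  rw [flowIntegral_sub hcontYZ hcontZY, ← hbracket]
  simp

end FlowDerivatives

section ContinuousAlong

variable {H P E : Type*} [TopologicalSpace P] [NormedAddCommGroup E] {u : P → E}

/-- `u` varies little along `φ` near the parameter `0`, locally uniformly in the starting point.
Continuity of `u` itself is not part of the notion. -/
def ContinuousAlong [TopologicalSpace H] [Zero H] (φ : H → P → P) (u : P → E) : Prop :=
  ∀ z₀, Tendsto (fun p : H × P ↦ u (φ p.1 p.2) - u p.2) (𝓝 (0, z₀)) (𝓝 0)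

namespace ContinuousAlong

variable {L : Type*} [TopologicalSpace H] [TopologicalSpace L] [Zero L] {b : L → H}

theorem comp_tendsto [Zero H] {φ : H → P → P} (hφ : ContinuousAlong φ u)
    (hb : Tendsto b (𝓝 0) (𝓝 0)) : ContinuousAlong (fun l ↦ φ (b l)) u := fun z₀ ↦
  (hφ z₀).comp (hb.prodMap_nhds tendsto_id)

theorem comp_flow [AddMonoid H] [ContinuousAdd H] {φ : L → P → P} {ψ : Flow H P}
    (hφ : ContinuousAlong φ u) (hψ : ContinuousAlong ψ u) (hb : Tendsto b (𝓝 0) (𝓝 0)) :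
    ContinuousAlong (fun l z ↦ φ l (ψ (b l) z)) u := by
  intro z₀
  have hb' : Tendsto (Prod.map b id) (𝓝 (0, z₀)) (𝓝 (0, z₀)) := hb.prodMap_nhds tendsto_id
  have hψ₀ : Tendsto (fun p : H × P ↦ ψ p.1 p.2) (𝓝 (0, z₀)) (𝓝 z₀) :=
    ψ.cont'.tendsto' _ _ (ψ.map_zero_apply z₀)
  have hψ' : Tendsto (fun p : L × P ↦ (p.1, ψ (b p.1) p.2)) (𝓝 (0, z₀)) (𝓝 (0, z₀)) :=
    continuousAt_fst.tendsto.prodMk_nhds (hψ₀.comp hb')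
  simpa [Function.comp_def] using ((hφ z₀).comp hψ').add ((hψ z₀).comp hb')

theorem continuousAt [Zero H] {φ : H → P → P} (hφ : ContinuousAlong φ u) {z₀ : P} {σ : P → H}
    (hσ : Tendsto σ (𝓝 z₀) (𝓝 0)) (hσφ : ∀ z, φ (σ z) z₀ = z) : ContinuousAt u z₀ := by
  have hincrement := (hφ z₀).comp (hσ.prodMk_nhds (tendsto_const_nhds (x := z₀)))
  simpa [ContinuousAt, Function.comp_def, hσφ] using hincrement.add_const (u z₀)

end ContinuousAlong

theorem continuousAlong_of_norm_sub_le [SeminormedAddCommGroup H] {φ : H → P → P} {C a : ℝ}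
    (ha : 0 < a) (hu : ∀ h z, ‖u (φ h z) - u z‖ ≤ C * ‖h‖ ^ a) : ContinuousAlong φ u := by
  intro z₀
  refine squeeze_zero_norm (fun p ↦ hu p.1 p.2) ?_
  have hcont : Continuous fun p : H × P ↦ C * ‖p.1‖ ^ a := by fun_prop (disch := grind)
  simpa [Real.zero_rpow ha.ne'] using hcont.tendsto (0, z₀)

theorem continuousAlong_of_iSup_ne_top {φ : Flow ℝ P} {a : ℝ} (ha : 0 < a)
    (hu : (⨆ (z : P) (τ : ℝ) (_ : τ ≠ 0), ENNReal.ofReal (‖u (φ τ z) - u z‖ / ‖τ‖ ^ a)) ≠ ⊤) :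
    ContinuousAlong φ u := by
  obtain ⟨C, hC⟩ := WithTop.ne_top_iff_exists.1 hu
  refine continuousAlong_of_norm_sub_le (C := C) ha fun τ z ↦ ?_
  rcases eq_or_ne τ 0 with rfl | hτ
  · simp [Real.zero_rpow ha.ne']
  · rw [← div_le_iff₀ (by positivity), ← ENNReal.ofReal_le_coe]
    refine le_trans ?_ hC.ge
    exact le_iSup₂_of_le z τ (le_iSup_of_le hτ le_rfl)

theorem HasFlowDeriv.continuousAlong [NormedSpace ℝ E] [CompleteSpace E]
    [FirstCountableTopology P] {φ : Flow ℝ P} {u' : P → E} (hu : HasFlowDeriv φ u u')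
    (hcont : Continuous u') : ContinuousAlong φ u := by
  intro z₀
  simp only [← (hasFlowDeriv_iff_flowIntegral_eq_sub hcont).1 hu]
  exact (continuous_flowIntegral hcont).tendsto' _ _ intervalIntegral.integral_same

/-- The commutator of the flows of `Y` and `Z` at times `τ` and `s` is the flow of `X` at time
`τ * s`; a time `c` is reached with `s = √|c|` and `τ = ±√|c|`. -/
theorem IsHeisenbergTriple.continuousAlong {X Y Z : Flow ℝ P} (hXYZ : IsHeisenbergTriple X Y Z)
    (hY : ContinuousAlong Y u) (hZ : ContinuousAlong Z u) : ContinuousAlong X u := by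
  have hs : Tendsto (fun c : ℝ ↦ √|c|) (𝓝 0) (𝓝 0) :=
    Continuous.tendsto' (by fun_prop) _ _ (by simp)
  have hτ : Tendsto (fun c : ℝ ↦ SignType.sign c * √|c|) (𝓝 0) (𝓝 0) := by
    refine squeeze_zero_norm (fun c ↦ ?_) hs
    rcases lt_trichotomy c 0 with hc | rfl | hc <;> simp [*, abs_of_nonneg]
  have hloop := (((hY.comp_tendsto (by simpa using hτ.neg)).comp_flow hZ
    (by simpa using hs.neg)).comp_flow hY hτ).comp_flow hZ hs
  simpa only [hXYZ.commutator, mul_assoc, Real.mul_self_sqrt (abs_nonneg _), sign_mul_abs]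
    using hloop

variable [AddCommGroup H] [Module ℝ H] [TopologicalSpace H] [ContinuousSMul ℝ H]

/-- The one-parameter flow in the direction `h` of an action of the vector space `H`. -/
def lineFlow [ContinuousAdd H] (φ : Flow H P) (h : H) : Flow ℝ P where
  toFun τ := φ (τ • h)
  cont' := by unfold Function.uncurry; fun_prop
  map_add' := by simp [add_smul, Flow.map_add]
  map_zero' := by simp

theorem continuousAlong_of_basis [IsTopologicalAddGroup H] [T2Space H] {ι : Type*} [Finite ι]
    {φ : Flow H P} (b : Module.Basis ι ℝ H) (hu : ∀ i, ContinuousAlong (lineFlow φ (b i)) u) :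
    ContinuousAlong φ u := by
  have := Fintype.ofFinite ι
  have : FiniteDimensional ℝ H := b.finiteDimensional_of_finite
  have hcoord (i : ι) : Tendsto (b.coord i) (𝓝 0) (𝓝 0) :=
    (b.coord i).continuous_of_finiteDimensional.tendsto' _ _ (map_zero _)
  have hsum (S : Finset ι) : ContinuousAlong (fun h ↦ φ (∑ i ∈ S, b.coord i h • b i)) u := by
    classical
    induction S using Finset.induction_on with
    | empty => simp [ContinuousAlong]
    | insert i S hi ih =>
      simpa [lineFlow, Finset.sum_insert hi, add_comm, ← Flow.map_add] using
        ih.comp_flow (hu i) (hcoord i)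
  simpa [b.sum_repr] using hsum Finset.univ

end ContinuousAlong

section ContDiffAlong

variable {K P E : Type*} [TopologicalSpace P] [NormedAddCommGroup E] [NormedSpace ℝ E]
  {φ : K → Flow ℝ P} {w : K → ℝ} {α : ℝ} {u v : P → E} {k : K}

/-- Where the flow `φ k` is given the weight `w k`, all the iterated Lie derivatives of `u` along
the flows `φ k` with weights summing up to less than `α`, at every stage of the iteration, exist and
are continuous; for weights `1` and `α = n + 1` this is `n`-fold continuous differentiability.
The functions `u' k` are the first Lie derivatives. -/
inductive ContDiffAlong (φ : K → Flow ℝ P) (w : K → ℝ) : ℝ → (P → E) → Prop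
  | intro {α : ℝ} {u : P → E} (u' : K → P → E) (continuous : Continuous u)
      (hasFlowDeriv : ∀ k, w k < α → HasFlowDeriv (φ k) u (u' k))
      (contDiffAlong : ∀ k, w k < α → ContDiffAlong φ w (α - w k) (u' k)) : ContDiffAlong φ w α u

namespace ContDiffAlong

theorem continuous (hu : ContDiffAlong φ w α u) : Continuous u := by
  cases hu; assumption

theorem hasFlowDeriv (hu : ContDiffAlong φ w α u) (hk : w k < α) :
    HasFlowDeriv (φ k) u (flowDeriv (φ k) u) := by
  cases hu with
  | intro u' _ hderiv _ => exact (hderiv k hk).flowDeriv_eq ▸ hderiv k hk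

protected theorem flowDeriv (hu : ContDiffAlong φ w α u) (hk : w k < α) :
    ContDiffAlong φ w (α - w k) (flowDeriv (φ k) u) := by
  cases hu with
  | intro u' _ hderiv hdiff => exact (hderiv k hk).flowDeriv_eq ▸ hdiff k hk

theorem sub (hu : ContDiffAlong φ w α u) (hv : ContDiffAlong φ w α v) :
    ContDiffAlong φ w α (u - v) := by
  induction hu generalizing v with
  | intro u' hcont hderiv _ ih =>
    exact .intro (fun k ↦ u' k - flowDeriv (φ k) v) (hcont.sub hv.continuous)
      (fun k hk ↦ (hderiv k hk).sub (hv.hasFlowDeriv hk)) (fun k hk ↦ ih k hk (hv.flowDeriv hk))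

variable [CompleteSpace E] [FirstCountableTopology P]

theorem of_continuousAlong_or_hasFlowDeriv
    (hcont : (∀ k, ContinuousAlong (φ k) u) → Continuous u)
    (hu : ∀ k, α ≤ w k ∧ ContinuousAlong (φ k) u ∨
      HasFlowDeriv (φ k) u (flowDeriv (φ k) u) ∧
        ContDiffAlong φ w (α - w k) (flowDeriv (φ k) u)) :
    ContDiffAlong φ w α u := by
  refine .intro (fun k ↦ flowDeriv (φ k) u) (hcont fun k ↦ ?_) (fun k hk ↦ ?_) (fun k hk ↦ ?_)
  · exact (hu k).elim And.right fun h ↦ h.1.continuousAlong h.2.continuous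
  · exact ((hu k).resolve_left fun h ↦ hk.not_ge h.1).1
  · exact ((hu k).resolve_left fun h ↦ hk.not_ge h.1).2

theorem sumElim {J : Type*} {ψ : J → Flow ℝ P} {a b : J → K}
    (hψ : ∀ j, IsHeisenbergTriple (ψ j) (φ (a j)) (φ (b j))) (hw : ∀ k, 0 ≤ w k)
    (hu : ContDiffAlong φ w α u) :
    ContDiffAlong (Sum.elim φ ψ) (Sum.elim w fun j ↦ w (a j) + w (b j)) α u := by
  induction hu with
  | @intro α u u' hcont hderiv hdiff ih =>
    refine .intro (Sum.elim u' fun j ↦ flowDeriv (φ (b j)) (u' (a j)) -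
      flowDeriv (φ (a j)) (u' (b j))) hcont ?_ ?_ <;> rintro (k | j) hk <;>
      simp only [Sum.elim_inl, Sum.elim_inr] at hk ⊢
    · exact hderiv k hk
    · have ha : w (a j) < α := by linarith [hw (b j)]
      have hb : w (b j) < α := by linarith [hw (a j)]
      have hab : w (b j) < α - w (a j) := by linarith
      have hba : w (a j) < α - w (b j) := by linarith
      exact (hψ j).hasFlowDeriv_sub (hderiv _ ha) (hderiv _ hb) ((hdiff _ ha).hasFlowDeriv hab)
        ((hdiff _ hb).hasFlowDeriv hba) hcont (hdiff _ ha).continuous (hdiff _ hb).continuous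
        ((hdiff _ ha).flowDeriv hab).continuous ((hdiff _ hb).flowDeriv hba).continuous
    · exact ih k hk
    · have hab := (ih (a j) (by linarith [hw (b j)])).flowDeriv (k := .inl (b j))
        (by simpa using by linarith)
      have hba := (ih (b j) (by linarith [hw (a j)])).flowDeriv (k := .inl (a j))
        (by simpa using by linarith)
      simp only [Sum.elim_inl, sub_sub] at hab hba
      exact hab.sub (add_comm (w (b j)) _ ▸ hba)

end ContDiffAlong

end ContDiffAlong

section IteratedFlowDerivatives

variable {K : Type*} {φ : K → Flow ℝ (Pt d)} {w : K → ℝ} {α : ℝ} {u : Pt d → ℝ} {k k' : K}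
  {e e' : Fin d → K} {l l' : List (Fin d)}

namespace ContDiffAlong

protected theorem derivList (hw : ∀ k, 0 ≤ w k) (hu : ContDiffAlong φ w α u)
    (hl : (l.map fun i ↦ w (e i)).sum < α) :
    ContDiffAlong φ w (α - (l.map fun i ↦ w (e i)).sum)
      (derivList (fun i ↦ flowDeriv (φ (e i))) l u) := by
  induction l with
  | nil => simpa [derivList] using hu
  | cons i l ih =>
    simp only [List.map_cons, List.sum_cons] at hl ⊢
    rw [add_comm, ← sub_sub]
    exact (ih (by linarith [hw (e i)])).flowDeriv (by linarith)

theorem existsDList (hw : ∀ k, 0 ≤ w k) (hu : ContDiffAlong φ w α u)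
    (hl : (l.map fun i ↦ w (e i)).sum < α) :
    ExistsDList (fun i ↦ φ (e i)) (fun i ↦ flowDeriv (φ (e i))) l u := by
  induction l with
  | nil => trivial
  | cons i l ih =>
    simp only [List.map_cons, List.sum_cons] at hl
    have hl' : (l.map fun i ↦ w (e i)).sum < α := by linarith [hw (e i)]
    exact ⟨ih hl', fun z ↦
      ((hu.derivList hw hl').hasFlowDeriv (by linarith) z).differentiableAt⟩

theorem flowDeriv_comm (hw : ∀ k, 0 ≤ w k) (hu : ContDiffAlong φ w α u)
    (hcomm : ∀ a b, Function.Commute (φ k a) (φ k' b)) (hk : w k + w k' < α) :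
    flowDeriv (φ k) (flowDeriv (φ k') u) = flowDeriv (φ k') (flowDeriv (φ k) u) := by
  have hk₁ : w k < α := by linarith [hw k']
  have hk₂ : w k' < α - w k := by linarith
  have hderiv := HasFlowDeriv.comm hcomm (hu.hasFlowDeriv hk₁)
    (hu.hasFlowDeriv (by linarith [hw k])) ((hu.flowDeriv hk₁).hasFlowDeriv hk₂)
    ((hu.flowDeriv hk₁).flowDeriv hk₂).continuous
  exact hderiv.flowDeriv_eq

theorem flowDeriv_derivList_comm (hw : ∀ k, 0 ≤ w k) (hu : ContDiffAlong φ w α u)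
    (hcomm : ∀ i a b, Function.Commute (φ k a) (φ (e i) b))
    (hl : w k + (l.map fun i ↦ w (e i)).sum < α) :
    flowDeriv (φ k) (derivList (fun i ↦ flowDeriv (φ (e i))) l u) =
      derivList (fun i ↦ flowDeriv (φ (e i))) l (flowDeriv (φ k) u) := by
  induction l with
  | nil => rfl
  | cons i l ih =>
    simp only [List.map_cons, List.sum_cons] at hl
    have hdiff := hu.derivList (l := l) (e := e) hw (by linarith [hw k, hw (e i)])
    simp only [derivList]
    rw [hdiff.flowDeriv_comm hw (hcomm i) (by linarith), ih (by linarith [hw (e i)])]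

theorem derivList_comm (hw : ∀ k, 0 ≤ w k) (hu : ContDiffAlong φ w α u)
    (hcomm : ∀ i j a b, Function.Commute (φ (e i) a) (φ (e' j) b))
    (hl : (l.map fun i ↦ w (e i)).sum + (l'.map fun i ↦ w (e' i)).sum < α) :
    derivList (fun i ↦ flowDeriv (φ (e i))) l
        (derivList (fun i ↦ flowDeriv (φ (e' i))) l' u) =
      derivList (fun i ↦ flowDeriv (φ (e' i))) l'
        (derivList (fun i ↦ flowDeriv (φ (e i))) l u) := by
  induction l with
  | nil => rfl
  | cons i l ih =>
    simp only [List.map_cons, List.sum_cons] at hl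
    have hl' : 0 ≤ (l'.map fun i ↦ w (e' i)).sum := List.sum_nonneg (by simp [hw])
    have hdiff := hu.derivList (l := l) (e := e) hw (by linarith [hw (e i)])
    simp only [derivList]
    rw [ih (by linarith [hw (e i)]), hdiff.flowDeriv_derivList_comm hw (hcomm i) (by linarith)]

end ContDiffAlong

theorem length_idxList (β : Fin d → ℕ) : (idxList β).length = ∑ i, β i := by
  simp [idxList, List.length_flatten, List.map_ofFn, List.sum_ofFn, Function.comp_def]

end IteratedFlowDerivatives

section GalileanFlows

variable {ϑ α : ℝ} {u : Pt d → ℝ}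

/-- The flow of `Y`. -/
def driftFlow : Flow ℝ (Pt d) where
  toFun := flowY
  cont' := by unfold flowY Function.uncurry; fun_prop
  map_add' a b z := by ext <;> simp [flowY] <;> ring
  map_zero' := by simp [flowY]

/-- Translations in the velocity variable; the flow of `Z_h` is the restriction to `ℝ h`. -/
def velocityTranslation : Flow (EuclideanSpace ℝ (Fin d)) (Pt d) where
  toFun h z := (z.1, z.2.1, z.2.2 + h)
  cont' := by unfold Function.uncurry; fun_prop
  map_add' := by simp; grind
  map_zero' := by simp

/-- Translations in the position variable. -/
def positionTranslation : Flow (EuclideanSpace ℝ (Fin d)) (Pt d) where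
  toFun h z := (z.1, z.2.1 + h, z.2.2)
  cont' := by unfold Function.uncurry; fun_prop
  map_add' := by simp; grind
  map_zero' := by simp

/-- The flows of the fields `Y` (index `none`) and `Z_i` (index `some i`). -/
def galileanFlow : Option (Fin d) → Flow ℝ (Pt d)
  | none => driftFlow
  | some i => lineFlow velocityTranslation (EuclideanSpace.single i 1)

/-- The intrinsic orders of the fields `Y` and `Z_i`. -/
def galileanWeight (ϑ : ℝ) : Option (Fin d) → ℝ
  | none => ϑ
  | some _ => 1

/-- The flows of the fields `Y`, `Z_i` and `∂_{x_i} = [Z_i, Y]` (index `Sum.inr i`). -/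
def galileanBracketFlow : Option (Fin d) ⊕ Fin d → Flow ℝ (Pt d) :=
  Sum.elim galileanFlow fun i ↦ lineFlow positionTranslation (EuclideanSpace.single i 1)

/-- The intrinsic orders of the fields `Y`, `Z_i` and `∂_{x_i}`: a bracket has the sum of the orders
of its two arguments. -/
def galileanBracketWeight (ϑ : ℝ) : Option (Fin d) ⊕ Fin d → ℝ :=
  Sum.elim (galileanWeight ϑ) fun i : Fin d ↦
    galileanWeight (d := d) ϑ none + galileanWeight ϑ (some i)

theorem galileanWeight_pos (hϑ : 0 < ϑ) : ∀ k : Option (Fin d), 0 < galileanWeight ϑ k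
  | none => hϑ
  | some _ => one_pos

theorem galileanBracketWeight_nonneg (hϑ : 0 < ϑ) :
    ∀ k : Option (Fin d) ⊕ Fin d, 0 ≤ galileanBracketWeight ϑ k
  | .inl k => (galileanWeight_pos hϑ k).le
  | .inr i => (add_pos (galileanWeight_pos hϑ none) (galileanWeight_pos hϑ (some i))).le

theorem min_one_le_galileanWeight : ∀ k : Option (Fin d), min 1 ϑ ≤ galileanWeight ϑ k
  | none => min_le_right 1 ϑ
  | some _ => min_le_left 1 ϑ

theorem isHeisenbergTriple_lineFlow (h : EuclideanSpace ℝ (Fin d)) :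
    IsHeisenbergTriple (lineFlow positionTranslation h) driftFlow
      (lineFlow velocityTranslation h) where
  commute_left a b z := by
    simp [lineFlow, positionTranslation, driftFlow, flowY, add_right_comm]
  commute_right a b z := rfl
  apply_apply τ s z := by
    simp [lineFlow, positionTranslation, velocityTranslation, driftFlow, flowY, mul_smul, add_assoc]

theorem continuous_of_continuousAlong_galileanFlow
    (hu : ∀ k : Option (Fin d), ContinuousAlong (galileanFlow k) u) : Continuous u := by
  have hv : ContinuousAlong velocityTranslation u :=
    continuousAlong_of_basis (EuclideanSpace.basisFun (Fin d) ℝ).toBasis fun i ↦ by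
      simpa [galileanFlow] using hu (some i)
  have hx : ContinuousAlong positionTranslation u :=
    continuousAlong_of_basis (EuclideanSpace.basisFun (Fin d) ℝ).toBasis fun i ↦ by
      simpa using (isHeisenbergTriple_lineFlow _).continuousAlong (hu none) (hu (some i))
  have hall := ((hv.comp_tendsto (b := fun l : Pt d ↦ l.2.2)
    (Continuous.tendsto' (by fun_prop) _ _ rfl)).comp_flow hx (b := fun l ↦ l.2.1)
    (Continuous.tendsto' (by fun_prop) _ _ rfl)).comp_flow (hu none) (b := Prod.fst)
    (Continuous.tendsto' (by fun_prop) _ _ rfl)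
  refine continuous_iff_continuousAt.2 fun z₀ ↦ hall.continuousAt
    (σ := fun z ↦ (z.1 - z₀.1, z.2.1 - (z₀.2.1 + (z.1 - z₀.1) • z₀.2.2), z.2.2 - z₀.2.2))
    (Continuous.tendsto' (by fun_prop) _ _ (by simp)) fun z ↦ ?_
  simp [velocityTranslation, positionTranslation, galileanFlow, driftFlow, flowY]

theorem continuousAlong_driftFlow (hϑ : 0 < ϑ) (hα : 0 < α) (hu : semiY ϑ α u ≠ ⊤) :
    ContinuousAlong (galileanFlow none) u :=
  continuousAlong_of_iSup_ne_top (div_pos hα hϑ) hu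

theorem continuousAlong_velocity (hα : 0 < α) (hu : ∑ i, semiZ i α u ≠ ⊤) (i : Fin d) :
    ContinuousAlong (galileanFlow (some i)) u :=
  continuousAlong_of_iSup_ne_top hα (ENNReal.sum_ne_top.1 hu i (Finset.mem_univ i))

theorem continuousAlong_galileanFlow (hϑ : 0 < ϑ) (hα : 0 < α)
    (hu : semiY ϑ α u + ∑ i, semiZ i α u ≠ ⊤) : ∀ k, ContinuousAlong (galileanFlow k) u
  | none => continuousAlong_driftFlow hϑ hα (ENNReal.add_ne_top.1 hu).1
  | some i => continuousAlong_velocity hα (ENNReal.add_ne_top.1 hu).2 i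

theorem le_and_continuousAlong_or_of_memAux_succ (hϑ : 0 < ϑ) (hα : 0 < α) {n : ℕ}
    (hu : memAux ϑ (n + 1) α u) (k : Option (Fin d)) :
    α ≤ galileanWeight ϑ k ∧ ContinuousAlong (galileanFlow k) u ∨
      galileanWeight ϑ k < α ∧ HasFlowDeriv (galileanFlow k) u (flowDeriv (galileanFlow k) u) ∧
        memAux ϑ n (α - galileanWeight ϑ k) (flowDeriv (galileanFlow k) u) := by
  rw [memAux] at hu
  split_ifs at hu with hmin hmax hϑ1
  · rw [hNormAux, if_pos hmin] at hu
    exact .inl ⟨hmin.trans (min_one_le_galileanWeight k), continuousAlong_galileanFlow hϑ hα hu k⟩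
  · rw [hNormAux, if_neg hmin, if_pos hmax, if_pos hϑ1, ENNReal.add_ne_top] at hu
    rw [min_eq_right hϑ1.le, not_le] at hmin
    rw [max_eq_left hϑ1.le] at hmax
    cases k with
    | none => exact .inr ⟨hmin, fun z ↦ (hu.1 z).hasDerivAt, hu.2.1⟩
    | some i => exact .inl ⟨hmax, continuousAlong_velocity hα hu.2.2.2 i⟩
  · rw [hNormAux, if_neg hmin, if_pos hmax, if_neg hϑ1, ENNReal.add_ne_top] at hu
    rw [min_eq_left (not_lt.1 hϑ1), not_le] at hmin
    rw [max_eq_right (not_lt.1 hϑ1)] at hmax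
    cases k with
    | none => exact .inl ⟨hmax, continuousAlong_driftFlow hϑ hα hu.2.2.1⟩
    | some i => exact .inr ⟨hmin, fun z ↦ (hu.1 i z).hasDerivAt, hu.2.1 i⟩
  · obtain ⟨hY, hY', hZ, hZ', -⟩ := hu
    rw [not_le, max_lt_iff] at hmax
    cases k with
    | none => exact .inr ⟨hmax.2, fun z ↦ (hY z).hasDerivAt, hY'⟩
    | some i => exact .inr ⟨hmax.1, fun z ↦ (hZ i z).hasDerivAt, hZ' i⟩

theorem contDiffAlong_of_memAux (hϑ : 0 < ϑ) {n : ℕ} (hα : 0 < α) (hn : α ≤ (n + 1) * min 1 ϑ)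
    (hu : memAux ϑ n α u) : ContDiffAlong galileanFlow (galileanWeight ϑ) α u := by
  induction n generalizing α u with
  | zero =>
    refine .of_continuousAlong_or_hasFlowDeriv continuous_of_continuousAlong_galileanFlow
      fun k ↦ .inl ⟨?_, continuousAlong_galileanFlow hϑ hα hu k⟩
    simpa using hn.trans_eq (by simp) |>.trans (min_one_le_galileanWeight k)
  | succ n ih =>
    refine .of_continuousAlong_or_hasFlowDeriv continuous_of_continuousAlong_galileanFlow
      fun k ↦ (le_and_continuousAlong_or_of_memAux_succ hϑ hα hu k).imp_right
        fun ⟨hk, hderiv, hmem⟩ ↦ ⟨hderiv, ih (sub_pos.2 hk) ?_ hmem⟩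
    push_cast at hn
    linarith [min_one_le_galileanWeight (ϑ := ϑ) k]

theorem IsHolder.contDiffAlong (hϑ : 0 < ϑ) (hα : 0 < α) (hu : IsHolder ϑ α u) :
    ContDiffAlong galileanFlow (galileanWeight ϑ) α u := by
  refine contDiffAlong_of_memAux hϑ hα ?_ hu
  rw [← div_le_iff₀ (lt_min one_pos hϑ), fuel]
  push_cast
  linarith [Nat.le_ceil (α / min 1 ϑ)]

theorem IsHolder.contDiffAlong_galileanBracketFlow (hϑ : 0 < ϑ) (hα : 0 < α)
    (hu : IsHolder ϑ α u) :
    ContDiffAlong galileanBracketFlow (galileanBracketWeight ϑ) α u :=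
  (hu.contDiffAlong hϑ hα).sumElim (a := fun _ ↦ none) (b := some)
    (fun _ ↦ isHeisenbergTriple_lineFlow _) fun k ↦ (galileanWeight_pos hϑ k).le

end GalileanFlows

/-- Commutation of mixed Euclidean derivatives: if `u ∈ C^α` and `(1+ϑ)|γ| + |β| < α`, then
`∂_v^β ∂_x^γ u` and `∂_x^γ ∂_v^β u` both exist at every point, are continuous, and agree. -/
theorem mixed_derivatives_commute (d : ℕ) (hd : 1 ≤ d) (ϑ : ℝ) (hϑ : 0 < ϑ)
    (α : ℝ) (hα : 0 < α) (u : Pt d → ℝ) (hu : IsHolder ϑ α u)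
    (γ β : Fin d → ℕ)
    (hlt : (1 + ϑ) * ((∑ i, γ i : ℕ) : ℝ) + ((∑ i, β i : ℕ) : ℝ) < α) :
    ExistsDxPow γ u ∧ ExistsDvPow β (dxPow γ u) ∧
    ExistsDvPow β u ∧ ExistsDxPow γ (dvPow β u) ∧
    Continuous (dvPow β (dxPow γ u)) ∧ Continuous (dxPow γ (dvPow β u)) ∧
    dvPow β (dxPow γ u) = dxPow γ (dvPow β u) := by
  let x : Fin d → Option (Fin d) ⊕ Fin d := .inr
  let v : Fin d → Option (Fin d) ⊕ Fin d := fun i ↦ .inl (some i)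
  have hw := galileanBracketWeight_nonneg (d := d) hϑ
  have hreg := hu.contDiffAlong_galileanBracketFlow hϑ hα
  have hγ : ((idxList γ).map fun i ↦ galileanBracketWeight ϑ (x i)).sum =
      (1 + ϑ) * (∑ i, γ i : ℕ) := by
    simp [x, galileanBracketWeight, galileanWeight, length_idxList, add_mul, add_comm, mul_comm]
  have hβ : ((idxList β).map fun i ↦ galileanBracketWeight ϑ (v i)).sum = (∑ i, β i : ℕ) := by
    simp [v, galileanBracketWeight, galileanWeight, length_idxList]
  have hγ₀ : 0 ≤ (1 + ϑ) * ((∑ i, γ i : ℕ) : ℝ) := by positivity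
  have hx := hreg.derivList (e := x) (l := idxList γ) hw (by linarith)
  have hv := hreg.derivList (e := v) (l := idxList β) hw (by linarith)
  exact ⟨hreg.existsDList (e := x) hw (by linarith), hx.existsDList (e := v) hw (by linarith),
    hreg.existsDList (e := v) hw (by linarith), hv.existsDList (e := x) hw (by linarith),
    (hx.derivList (e := v) hw (by linarith)).continuous,
    (hv.derivList (e := x) hw (by linarith)).continuous,
    hreg.derivList_comm (e := v) (e' := x) hw (fun _ _ _ _ _ ↦ rfl) (by linarith)⟩
end
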